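/- Let a = {aⱼ} be a summable, non-increasing sequence of positive real numbers with associated Cantor set C_a. For any dimension function h: P₀^h(C_a) = 0 if and only if P^h(C_a) = 0; P₀^h(C_a) = ∞ if and only if P^h(C_a) = ∞; and 0 < P₀^h(C_a) < ∞ if and only if 0 < P^h(C_a) < ∞. -/

import Mathlib

open Set Filter Metric MeasureTheory
open scoped ENNReal NNReal Topology

noncomputable section

/-- The `h`-Hausdorff measure of `E ⊆ ℝ`:
`H^h(E) = lim_{δ→0⁺} inf {Σᵢ h(|Eᵢ|) : E ⊆ ⋃ᵢ Eᵢ, |Eᵢ| ≤ δ}`.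
Since the inner infimum is antitone in `δ`, the limit as `δ → 0⁺` is the
supremum over `0 < δ ≤ A` (the parameter `A` records the domain `(0,A]` of the
dimension function `h`; by monotonicity the value of the limit is unchanged). -/
def Hh (A : ℝ) (h : ℝ → ℝ≥0∞) (E : Set ℝ) : ℝ≥0∞ :=
  ⨆ (δ : ℝ) (_ : 0 < δ) (_ : δ ≤ A),
    ⨅ (t : ℕ → Set ℝ) (_ : E ⊆ ⋃ n, t n) (_ : ∀ n, Metric.diam (t n) ≤ δ),
      ∑' n, h (Metric.diam (t n))

/-- A `δ`-packing of `E`: a countable disjoint family of open balls centered at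
points of `E` with diameters less than `δ`, recorded as a set of
(center, radius) pairs. -/
def IsPacking (E : Set ℝ) (δ : ℝ) (P : Set (ℝ × ℝ)) : Prop :=
  P.Countable ∧ (∀ p ∈ P, p.1 ∈ E ∧ 0 < p.2 ∧ 2 * p.2 < δ) ∧
    P.PairwiseDisjoint fun p => Metric.ball p.1 p.2

/-- The `h`-packing pre-measure of `E ⊆ ℝ`:
`P₀^h(E) = lim_{δ→0⁺} sup {Σᵢ h(|Bᵢ|) : {Bᵢ} is a δ-packing of E}`.
The inner supremum is monotone in `δ`, so the limit as `δ → 0⁺` is the infimum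
over `0 < δ ≤ A`. -/
def P0h (A : ℝ) (h : ℝ → ℝ≥0∞) (E : Set ℝ) : ℝ≥0∞ :=
  ⨅ (δ : ℝ) (_ : 0 < δ) (_ : δ ≤ A),
    ⨆ (P : Set (ℝ × ℝ)) (_ : IsPacking E δ P), ∑' p : P, h (2 * (p : ℝ × ℝ).2)

/-- The `h`-packing measure: `P^h(E) = inf {Σᵢ P₀^h(Eᵢ) : E = ⋃ᵢ Eᵢ}`. -/
def Ph (A : ℝ) (h : ℝ → ℝ≥0∞) (E : Set ℝ) : ℝ≥0∞ :=
  ⨅ (t : ℕ → Set ℝ) (_ : E = ⋃ n, t n), ∑' n, P0h A h (t n)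

/-- `h` is a dimension function with domain `(0, A]`: continuous, increasing,
doubling, positive, with `h(x) → 0` as `x → 0⁺`.  We record partial functions
`(0,A] → (0,∞]` as functions `ℝ → ℝ≥0∞` extended by `0` on nonpositive
arguments (the continuous extension at `0`). -/
structure IsDimFun (A : ℝ) (h : ℝ → ℝ≥0∞) : Prop where
  posA : 0 < A
  zero_of_nonpos : ∀ x : ℝ, x ≤ 0 → h x = 0
  pos : ∀ x ∈ Set.Ioc (0 : ℝ) A, 0 < h x
  continuousOn : ContinuousOn h (Set.Ioc 0 A)
  strictMonoOn : StrictMonoOn h (Set.Ioc 0 A)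
  doubling : ∃ τ : ℝ≥0∞, 0 < τ ∧ τ ≠ ∞ ∧ ∀ x : ℝ, 0 < x → 2 * x ≤ A → τ * h (2 * x) ≤ h x
  tendsto_zero : Tendsto h (nhdsWithin 0 (Set.Ioi 0)) (nhds 0)

/-- `f ≼ h` on `(0, A]`: there is a (finite, positive) constant `c` with
`f(x) ≤ c·h(x)` for all `x ∈ (0,A]`. -/
def FLeq (A : ℝ) (f h : ℝ → ℝ≥0∞) : Prop :=
  ∃ c : ℝ≥0∞, 0 < c ∧ c ≠ ∞ ∧ ∀ x ∈ Set.Ioc (0 : ℝ) A, f x ≤ c * h x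

/-- `f ≡ h` on `(0, A]`: `f ≼ h` and `h ≼ f`. -/
def FEquiv (A : ℝ) (f h : ℝ → ℝ≥0∞) : Prop := FLeq A f h ∧ FLeq A h f

/-- Tail of a series: `rTail a n = Σ_{j ≥ n} a j` (0-based indexing, so the
paper's `r_n`, `n ≥ 1`, is `rTail a (n-1)`). -/
def rTail (a : ℕ → ℝ) (n : ℕ) : ℝ := ∑' k : ℕ, a (n + k)

/-- In the Cantor construction for the gap sequence `a`, the gaps are indexed
by the nodes `m ≥ 1` of the infinite binary tree in heap order (node `m` has
children `2m, 2m+1`), the gap at node `m` having length `a (m-1)`.  `nodeLen a m`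
is the sum of the lengths of all gaps in the subtree rooted at `m`, i.e. the
length of the step interval corresponding to node `m`. -/
def nodeLen (a : ℕ → ℝ) (m : ℕ) : ℝ :=
  ∑' k : ℕ, ∑ i ∈ Finset.range (2 ^ k), a (m * 2 ^ k + i - 1)

/-- Left endpoint of the `j`-th (0 ≤ j < 2^k, left to right) step-`k` interval
in the Cantor construction for the gap sequence `a` (realized in `[0, Σ a]`):
a left child keeps its parent's left endpoint; a right child's interval starts
after its left sibling's interval followed by the parent's gap. -/
def leftEnd (a : ℕ → ℝ) : ℕ → ℕ → ℝ
  | 0, _ => 0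
  | (k + 1), j =>
    if j % 2 = 0 then leftEnd a k (j / 2)
    else leftEnd a k (j / 2) + nodeLen a (2 ^ (k + 1) + j - 1) + a (2 ^ k + j / 2 - 1)

/-- The Cantor set `C_a` associated with a (positive, non-increasing, summable)
sequence `a`, realized inside the interval `[0, Σ a]`: the intersection over
`k` of the unions of the `2^k` step-`k` intervals. -/
def cantorSetOf (a : ℕ → ℝ) : Set ℝ :=
  ⋂ k : ℕ, ⋃ j ∈ Finset.range (2 ^ k),
    Set.Icc (leftEnd a k j) (leftEnd a k j + nodeLen a (2 ^ k + j))

/-- `h` (increasing and continuous on `(0, A]`) is associated to the sequence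
`a`: the sequence `{h(r_n/n)}` is equivalent to `{1/n}`, i.e. there are
constants `0 < c₁, c₂ < ∞` with `c₁ ≤ n · h(r_n/n) ≤ c₂` for all `n ≥ 1`
(0-based: `n ≥ 1` corresponds to `n+1` below). -/
def IsAssociated (A : ℝ) (h : ℝ → ℝ≥0∞) (a : ℕ → ℝ) : Prop :=
  ContinuousOn h (Set.Ioc 0 A) ∧ StrictMonoOn h (Set.Ioc 0 A) ∧
  ∃ c₁ c₂ : ℝ≥0∞, 0 < c₁ ∧ c₂ ≠ ∞ ∧ ∀ n : ℕ,
    c₁ ≤ ((n : ℝ≥0∞) + 1) * h (rTail a n / ((n : ℝ) + 1)) ∧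
    ((n : ℝ≥0∞) + 1) * h (rTail a n / ((n : ℝ) + 1)) ≤ c₂

/-- Weak tail-equivalence: there are positive integers `j, k` with
`r_n^{(a)} ≥ r_{jn}^{(b)}/j` and `r_n^{(b)} ≥ r_{kn}^{(a)}/k` for all `n ≥ 1`
(0-based shift: paper's `r_n` is `rTail · (n-1)`). -/
def WeakTailEquiv (a b : ℕ → ℝ) : Prop :=
  ∃ j k : ℕ, 0 < j ∧ 0 < k ∧
    (∀ n : ℕ, rTail b (j * (n + 1) - 1) / (j : ℝ) ≤ rTail a n) ∧
    (∀ n : ℕ, rTail a (k * (n + 1) - 1) / (k : ℝ) ≤ rTail b n)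

/-- Tail-equivalence: the sequences of tails are equivalent, i.e. the ratios
`r_n^{(a)}/r_n^{(b)}` are bounded above and below by positive constants. -/
def TailEquiv (a b : ℕ → ℝ) : Prop :=
  ∃ c₁ c₂ : ℝ, 0 < c₁ ∧ ∀ n : ℕ,
    c₁ ≤ rTail a n / rTail b n ∧ rTail a n / rTail b n ≤ c₂

/-- The Hausdorff dimension of `E`, computed from the `h_s`-Hausdorff measures,
`h_s(x) = x^s`:  `dim_H E = sup {s > 0 : H^{h_s}(E) = ∞}`. -/
def hausdDim (A : ℝ) (E : Set ℝ) : ℝ≥0∞ :=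
  ⨆ (s : ℝ) (_ : 0 < s) (_ : Hh A (fun x => ENNReal.ofReal (x ^ s)) E = ∞),
    ENNReal.ofReal s

/-- The packing dimension of `E`: `dim_P E = sup {s > 0 : P^{h_s}(E) = ∞}`. -/
def packDim (A : ℝ) (E : Set ℝ) : ℝ≥0∞ :=
  ⨆ (s : ℝ) (_ : 0 < s) (_ : Ph A (fun x => ENNReal.ofReal (x ^ s)) E = ∞),
    ENNReal.ofReal s

/-- The pre-packing dimension of `E`: `dim_{P₀} E = sup {s > 0 : P₀^{h_s}(E) = ∞}`. -/
def prePackDim (A : ℝ) (E : Set ℝ) : ℝ≥0∞ :=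
  ⨆ (s : ℝ) (_ : 0 < s) (_ : P0h A (fun x => ENNReal.ofReal (x ^ s)) E = ∞),
    ENNReal.ofReal s

/-- `f ≼ h` on the set `S`, for real-valued functions. -/
def RLeqOn (S : Set ℝ) (f h : ℝ → ℝ) : Prop :=
  ∃ c : ℝ, 0 < c ∧ ∀ x ∈ S, f x ≤ c * h x

/-- `f ≡ h` on the set `S`, for real-valued functions. -/
def REquivOn (S : Set ℝ) (f h : ℝ → ℝ) : Prop := RLeqOn S f h ∧ RLeqOn S h f

/-- Real-valued version of `IsAssociated`: `h : (0,A] → (0,∞)` is increasing,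
continuous, positive and `{h(r_n/n)} ≡ {1/n}`. -/
def IsAssociatedR (A : ℝ) (h : ℝ → ℝ) (a : ℕ → ℝ) : Prop :=
  ContinuousOn h (Set.Ioc 0 A) ∧ StrictMonoOn h (Set.Ioc 0 A) ∧
  (∀ x ∈ Set.Ioc (0 : ℝ) A, 0 < h x) ∧
  ∃ c₁ c₂ : ℝ, 0 < c₁ ∧ ∀ n : ℕ,
    c₁ ≤ ((n : ℝ) + 1) * h (rTail a n / ((n : ℝ) + 1)) ∧
    ((n : ℝ) + 1) * h (rTail a n / ((n : ℝ) + 1)) ≤ c₂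

end

/-!
Pushing Lebesgue measure forward along binary expansions gives a probability measure `μ` on `C_a`
with mass `2⁻ᵏ` on each step-`k` interval. If `sₖ` is the length of the longest step-`k` interval,
monotonicity of `a` forces all step-`k` lengths to lie between `sₖ₊₁` and `sₖ`. Hence, uniformly in
`x ∈ C_a`, a ball at `x` of radius larger than `sₖ` has mass at least `2⁻ᵏ`, and one of radius
`sₖ₊₁` meets at most three step-`k` intervals and has mass at most `3 · 2⁻ᵏ`.

Both `P₀^h(C_a)` and `P^h(C_a)` are therefore comparable to `limsup 2ᵏ h(sₖ)`. The pre-measure is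
bounded above because the balls of a packing are disjoint, so their masses add up to at most `1`.
The packing measure is bounded below because, for any `F ⊆ C_a`, balls of radius `s / 2` about a
maximal `s`-separated subset of `F` form a packing of `F`, while the concentric balls of radius `s`
cover `F`: along scales `s` realising the limsup this bounds `P₀^h(F)` from below by a multiple of
`μ(F)`, and the latter is countably subadditive in `F`. Since `P^h ≤ P₀^h` always holds, the two
are comparable.
-/

lemma zero_top_pos_iff_of_le_of_le_mul {x y C : ℝ≥0∞} (hxy : x ≤ y) (hC : C ≠ ∞)
    (hyx : y ≤ C * x) :
    (y = 0 ↔ x = 0) ∧ (y = ∞ ↔ x = ∞) ∧ (0 < y ∧ y < ∞ ↔ 0 < x ∧ x < ∞) := by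
  have zero_iff : y = 0 ↔ x = 0 :=
    ⟨fun hy => by simpa [hy] using hxy, fun hx => by simpa [hx] using hyx⟩
  have top_iff : y = ∞ ↔ x = ∞ := by
    refine ⟨fun hy => ?_, fun hx => by simpa [hx] using hxy⟩
    by_contra hx
    exact ENNReal.mul_ne_top hC hx (top_le_iff.1 (hy ▸ hyx))
  exact ⟨zero_iff, top_iff, by simp only [pos_iff_ne_zero, lt_top_iff_ne_top, ne_eq, *]⟩

lemma exists_isSeparated_isCover {X : Type*} [PseudoEMetricSpace X] (ε : ℝ≥0) (s : Set X) :
    ∃ N ⊆ s, IsSeparated ε N ∧ IsCover ε s N := by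
  obtain ⟨N, hN⟩ := zorn_subset {N | N ⊆ s ∧ IsSeparated ε N} fun c hc hchain =>
    ⟨⋃₀ c, ⟨sUnion_subset fun N hN => (hc hN).1,
      (pairwise_sUnion hchain.directedOn).2 fun N hN => (hc hN).2⟩,
      fun N hN => subset_sUnion_of_mem hN⟩
  exact ⟨N, hN.prop.1, hN.prop.2, .of_maximal_isSeparated hN⟩

lemma pairwiseDisjoint_ball_of_isSeparated {X : Type*} [PseudoMetricSpace X] {r : ℝ≥0}
    {N : Set X} (hN : IsSeparated r N) : N.PairwiseDisjoint fun x => ball x ((r : ℝ) / 2) := by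
  intro x hx y hy hxy
  have hr : (r : ℝ) < dist x y := by
    have hsep : (r : ℝ≥0∞) < edist x y := hN hx hy hxy
    rwa [edist_nndist, ENNReal.coe_lt_coe, ← NNReal.coe_lt_coe, coe_nndist] at hsep
  exact ball_disjoint_ball (by linarith)

lemma eventually_exists_mem_Ioc_of_tendsto {ℓ : ℕ → ℝ} (hℓ : Tendsto ℓ atTop (𝓝[>] 0))
    {p : ℕ → Prop} (hp : ∀ᶠ k in atTop, p k) :
    ∀ᶠ r in 𝓝[>] (0 : ℝ), ∃ k, p k ∧ r ∈ Ioc (ℓ (k + 1)) (ℓ k) := by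
  rw [tendsto_nhdsWithin_iff] at hℓ
  obtain ⟨K, hK⟩ := (hp.and hℓ.2).exists_forall_of_atTop
  filter_upwards [Ioc_mem_nhdsGT (hK K le_rfl).2] with r ⟨hr, hrK⟩
  by_contra! hno
  have hle : ∀ k ≥ K, r ≤ ℓ k := fun k hk => by
    induction k, hk using Nat.le_induction with
    | base => exact hrK
    | succ k hk ih => exact not_lt.1 fun hlt => hno k (hK k hk).1 ⟨hlt, ih⟩
  exact hr.not_ge (ge_of_tendsto hℓ.1 ((eventually_ge_atTop K).mono hle))

section PackingMeasure

variable {A : ℝ} {h : ℝ → ℝ≥0∞} {E : Set ℝ} {μ : Measure ℝ} {c : ℝ≥0∞}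

lemma P0h_empty (hA : 0 < A) : P0h A h ∅ = 0 := by
  refine le_antisymm (iInf_le_of_le A <| iInf₂_le_of_le hA le_rfl <| iSup₂_le fun P hP => ?_) bot_le
  obtain rfl : P = ∅ := eq_empty_of_forall_notMem fun p hp => (hP.2.1 p hp).1
  simp only [tsum_empty, le_refl]

lemma Ph_le_P0h (hA : 0 < A) : Ph A h E ≤ P0h A h E := by
  refine iInf₂_le_of_le (fun n => if n = 0 then E else ∅) (by ext; simp) (le_of_eq ?_)
  rw [tsum_eq_single 0 fun n hn => by simp only [if_neg hn, P0h_empty hA]]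
  exact congr_arg (P0h A h) (if_pos rfl)

lemma P0h_le_mul_measure_univ (hA : 0 < A)
    (hμ : ∀ᶠ r in 𝓝[>] (0 : ℝ), ∀ x ∈ E, h (2 * r) ≤ c * μ (ball x r)) :
    P0h A h E ≤ c * μ univ := by
  obtain ⟨ε, hε, hball⟩ := mem_nhdsGT_iff_exists_Ioo_subset.1 hμ
  refine iInf_le_of_le (min A ε) <| iInf₂_le_of_le (lt_min hA hε) (min_le_left _ _) <|
    iSup₂_le fun P ⟨_, hP, hdisj⟩ => ?_
  calc ∑' p : P, h (2 * (p : ℝ × ℝ).2)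
      ≤ ∑' p : P, c * μ (ball (p : ℝ × ℝ).1 (p : ℝ × ℝ).2) := by
        refine ENNReal.tsum_le_tsum fun ⟨p, hp⟩ => ?_
        obtain ⟨hpE, hp_pos, hp_lt⟩ := hP p hp
        exact hball ⟨hp_pos, by linarith [min_le_right A ε]⟩ p.1 hpE
    _ = c * ∑' p : P, μ (ball (p : ℝ × ℝ).1 (p : ℝ × ℝ).2) := ENNReal.tsum_mul_left
    _ ≤ c * μ univ := by
        gcongr
        exact (tsum_meas_le_meas_iUnion_of_disjoint μ (fun _ => measurableSet_ball)
          (hdisj.subtype _ _)).trans (measure_mono (subset_univ _))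

lemma isPacking_image_of_isSeparated {r : ℝ≥0} {N : Set ℝ} {δ : ℝ} (hNE : N ⊆ E)
    (hN : IsSeparated r N) (hr : 0 < r) (hrδ : r < δ) :
    IsPacking E δ ((fun x => (x, (r : ℝ) / 2)) '' N) := by
  have hr₂ : (0 : ℝ) < r / 2 := by positivity
  have hdisj := pairwiseDisjoint_ball_of_isSeparated hN
  refine ⟨(hdisj.countable_of_isOpen (fun _ _ => isOpen_ball)
    fun x _ => ⟨x, mem_ball_self hr₂⟩).image _, ?_, ?_⟩
  · rintro _ ⟨x, hx, rfl⟩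
    exact ⟨hNE hx, hr₂, by linarith⟩
  · rintro _ ⟨x, hx, rfl⟩ _ ⟨y, hy, rfl⟩ hxy
    exact hdisj hx hy fun h => hxy (by rw [h])

lemma mul_measure_le_P0h
    (hμ : ∃ᶠ r in 𝓝[>] (0 : ℝ), ∀ x ∈ E, c * μ (closedBall x r) ≤ h r) :
    c * μ E ≤ P0h A h E := by
  refine le_iInf fun δ => le_iInf₂ fun hδ _ => ?_
  obtain ⟨r, hball, hr, hrδ⟩ := (hμ.and_eventually (Ioo_mem_nhdsGT hδ)).exists
  lift r to ℝ≥0 using hr.le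
  obtain ⟨N, hNE, hsep, hcover⟩ := exists_isSeparated_isCover r E
  have hpack := isPacking_image_of_isSeparated hNE hsep (by exact_mod_cast hr) hrδ
  have hN : N.Countable := by simpa [image_image] using hpack.1.image Prod.fst
  calc c * μ E
      ≤ c * ∑' x : N, μ (closedBall x r) := by
        gcongr
        exact (measure_mono (isCover_iff_subset_iUnion_closedBall.1 hcover)).trans
          (measure_biUnion_le μ hN _)
    _ = ∑' x : N, c * μ (closedBall x r) := ENNReal.tsum_mul_left.symm
    _ ≤ ∑' x : N, h (2 * (r / 2)) :=
        ENNReal.tsum_le_tsum fun x => by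
          rw [mul_div_cancel₀ _ two_ne_zero]; exact hball x (hNE x.2)
    _ = ∑' p : (fun x => (x, (r : ℝ) / 2)) '' N, h (2 * (p : ℝ × ℝ).2) :=
        (tsum_image (fun p : ℝ × ℝ => h (2 * p.2))
          (Prod.mk_left_injective _).injOn).symm
    _ ≤ _ := le_iSup₂_of_le _ hpack le_rfl

lemma mul_measure_le_Ph
    (hμ : ∃ᶠ r in 𝓝[>] (0 : ℝ), ∀ x ∈ E, c * μ (closedBall x r) ≤ h r) :
    c * μ E ≤ Ph A h E := by
  refine le_iInf₂ fun t ht => ?_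
  calc c * μ E ≤ c * ∑' n, μ (t n) := by
        gcongr
        exact ht ▸ measure_iUnion_le t
    _ = ∑' n, c * μ (t n) := ENNReal.tsum_mul_left.symm
    _ ≤ ∑' n, P0h A h (t n) := ENNReal.tsum_le_tsum fun n =>
        mul_measure_le_P0h (hμ.mono fun r hr x hx => hr x (ht ▸ mem_iUnion_of_mem n hx))

end PackingMeasure

section StepLengths

variable {a : ℕ → ℝ} {k m : ℕ}

/-- Total length of the gaps lying `k` generations below node `m` in the gap tree; these add
up to `nodeLen a m`. -/
noncomputable def generationSum (a : ℕ → ℝ) (m k : ℕ) : ℝ :=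
  ∑ i ∈ Finset.range (2 ^ k), a (m * 2 ^ k + i - 1)

lemma generationSum_nonneg (ha₀ : ∀ n, 0 ≤ a n) : 0 ≤ generationSum a m k :=
  Finset.sum_nonneg fun _ _ => ha₀ _

lemma generationSum_zero : generationSum a m 0 = a (m - 1) := by
  simp [generationSum]

lemma generationSum_succ :
    generationSum a m (k + 1) = generationSum a (2 * m) k + generationSum a (2 * m + 1) k := by
  simp only [generationSum, pow_succ, mul_two, Finset.sum_range_add]
  congr 1 <;> refine Finset.sum_congr rfl fun i _ => ?_ <;> congr 2 <;> ring

lemma antitone_generationSum (ha : Antitone a) : Antitone fun m => generationSum a m k :=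
  fun _ _ hm => Finset.sum_le_sum fun _ _ => ha (by gcongr)

lemma generationSum_le (ha : Antitone a) :
    generationSum a m k ≤ 2 ^ k * a (m * 2 ^ k - 1) := by
  calc generationSum a m k
      ≤ ∑ _i ∈ Finset.range (2 ^ k), a (m * 2 ^ k - 1) :=
        Finset.sum_le_sum fun i _ => ha (by omega)
    _ = 2 ^ k * a (m * 2 ^ k - 1) := by simp

lemma summable_two_pow_mul_of_antitone (ha₀ : ∀ n, 0 ≤ a n) (ha : Antitone a)
    (hs : Summable a) : Summable fun k => 2 ^ k * a (2 ^ k - 1) := by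
  rw [summable_condensed_iff_of_nonneg (f := fun n => a (n - 1)) (fun _ => ha₀ _)
    fun _ _ _ hmn => ha (by omega)]
  exact (summable_nat_add_iff 1).1 hs

lemma summable_generationSum (ha₀ : ∀ n, 0 ≤ a n) (ha : Antitone a) (hs : Summable a)
    (hm : 0 < m) : Summable (generationSum a m) := by
  refine (summable_two_pow_mul_of_antitone ha₀ ha hs).of_nonneg_of_le
    (fun _ => generationSum_nonneg ha₀) fun k => ?_
  have hle : generationSum a m k ≤ generationSum a 1 k :=
    antitone_generationSum ha (Nat.one_le_iff_ne_zero.2 hm.ne')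
  simpa only [one_mul] using hle.trans (generationSum_le ha)

lemma nodeLen_eq_add (ha₀ : ∀ n, 0 ≤ a n) (ha : Antitone a) (hs : Summable a) (hm : 0 < m) :
    nodeLen a m = a (m - 1) + (nodeLen a (2 * m) + nodeLen a (2 * m + 1)) := by
  have hsum {n : ℕ} (hn : 0 < n) := summable_generationSum ha₀ ha hs hn
  calc nodeLen a m = generationSum a m 0 + ∑' k, generationSum a m (k + 1) :=
        (hsum hm).tsum_eq_zero_add
    _ = _ := by
      simp only [generationSum_zero, generationSum_succ]
      rw [(hsum (by omega)).tsum_add (hsum (by omega))]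
      rfl

lemma antitoneOn_nodeLen (ha₀ : ∀ n, 0 ≤ a n) (ha : Antitone a) (hs : Summable a) :
    AntitoneOn (nodeLen a) (Ioi 0) := fun _ hm _ hn hmn =>
  (summable_generationSum ha₀ ha hs hn).tsum_le_tsum
    (fun _ => antitone_generationSum ha hmn) (summable_generationSum ha₀ ha hs hm)

lemma nodeLen_nonneg (ha₀ : ∀ n, 0 ≤ a n) : 0 ≤ nodeLen a m :=
  tsum_nonneg fun _ => generationSum_nonneg ha₀

lemma nodeLen_pos (ha₀ : ∀ n, 0 < a n) (ha : Antitone a) (hs : Summable a) (hm : 0 < m) :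
    0 < nodeLen a m := by
  have hle n : 0 ≤ a n := (ha₀ n).le
  rw [nodeLen_eq_add hle ha hs hm]
  exact add_pos_of_pos_of_nonneg (ha₀ _) (add_nonneg (nodeLen_nonneg hle) (nodeLen_nonneg hle))

/-- Length of the leftmost step-`k` interval, which is the longest one. -/
noncomputable def stepLen (a : ℕ → ℝ) (k : ℕ) : ℝ := nodeLen a (2 ^ k)

lemma nodeLen_le_stepLen (ha₀ : ∀ n, 0 ≤ a n) (ha : Antitone a) (hs : Summable a) (j : ℕ) :
    nodeLen a (2 ^ k + j) ≤ stepLen a k :=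
  antitoneOn_nodeLen ha₀ ha hs (by simp) (by simp) (by omega)

lemma stepLen_succ_le_nodeLen (ha₀ : ∀ n, 0 ≤ a n) (ha : Antitone a) (hs : Summable a) {j : ℕ}
    (hj : j < 2 ^ k) : stepLen a (k + 1) ≤ nodeLen a (2 ^ k + j) :=
  antitoneOn_nodeLen ha₀ ha hs (by simp) (by simp) (by omega)

lemma tendsto_stepLen (ha₀ : ∀ n, 0 < a n) (ha : Antitone a) (hs : Summable a) :
    Tendsto (stepLen a) atTop (𝓝[>] 0) := by
  have hle n : 0 ≤ a n := (ha₀ n).le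
  have hcond := summable_two_pow_mul_of_antitone hle ha hs
  refine tendsto_nhdsWithin_iff.2 ⟨?_, .of_forall fun k => nodeLen_pos ha₀ ha hs (by simp)⟩
  refine squeeze_zero (fun k => nodeLen_nonneg hle) (fun k => ?_)
    (tendsto_sum_nat_add fun k => 2 ^ k * a (2 ^ k - 1))
  refine (summable_generationSum hle ha hs (by simp)).tsum_le_tsum (fun n => ?_)
    ((summable_nat_add_iff k).2 hcond)
  calc generationSum a (2 ^ k) n ≤ 2 ^ n * a (2 ^ k * 2 ^ n - 1) := generationSum_le ha
    _ = 2 ^ n * a (2 ^ (n + k) - 1) := by rw [← pow_add, add_comm]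
    _ ≤ 2 ^ (n + k) * a (2 ^ (n + k) - 1) := by
      gcongr
      exacts [hle _, one_le_two, by omega]

end StepLengths

section StepIntervals

variable {a : ℕ → ℝ} {k i j : ℕ} {x y : ℝ}

/-- Right endpoint of the `j`-th step-`k` interval of the Cantor construction. -/
noncomputable def rightEnd (a : ℕ → ℝ) (k j : ℕ) : ℝ := leftEnd a k j + nodeLen a (2 ^ k + j)

/-- The `j`-th step-`k` interval of the Cantor construction, meaningful for `j < 2 ^ k`. -/
def stepInterval (a : ℕ → ℝ) (k j : ℕ) : Set ℝ := Icc (leftEnd a k j) (rightEnd a k j)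

lemma mem_cantorSetOf : x ∈ cantorSetOf a ↔ ∀ k, ∃ j < 2 ^ k, x ∈ stepInterval a k j := by
  simp only [cantorSetOf, mem_iInter, mem_iUnion, Finset.mem_range, exists_prop, stepInterval,
    rightEnd]

lemma leftEnd_le_rightEnd (ha₀ : ∀ n, 0 ≤ a n) : leftEnd a k j ≤ rightEnd a k j :=
  le_add_of_nonneg_right (nodeLen_nonneg ha₀)

lemma leftEnd_two_mul : leftEnd a (k + 1) (2 * i) = leftEnd a k i := by
  simp [leftEnd]

lemma leftEnd_two_mul_add_one :
    leftEnd a (k + 1) (2 * i + 1) = rightEnd a (k + 1) (2 * i) + a (2 ^ k + i - 1) := by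
  have hmod : (2 * i + 1) % 2 ≠ 0 := by omega
  have hdiv : (2 * i + 1) / 2 = i := by omega
  rw [rightEnd, leftEnd_two_mul, leftEnd, if_neg hmod, hdiv]
  rfl

lemma rightEnd_two_mul_add_one (ha₀ : ∀ n, 0 ≤ a n) (ha : Antitone a) (hs : Summable a) :
    rightEnd a (k + 1) (2 * i + 1) = rightEnd a k i := by
  rw [rightEnd, leftEnd_two_mul_add_one, rightEnd, rightEnd, leftEnd_two_mul,
    nodeLen_eq_add ha₀ ha hs (show 0 < 2 ^ k + i by positivity)]
  ring_nf

lemma stepInterval_succ_subset (ha₀ : ∀ n, 0 ≤ a n) (ha : Antitone a) (hs : Summable a) :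
    stepInterval a (k + 1) j ⊆ stepInterval a k (j / 2) := by
  obtain ⟨i, hi⟩ := Nat.even_or_odd' j
  have hdiv : j / 2 = i := by omega
  have hleft := leftEnd_two_mul (a := a) (k := k) (i := i)
  have hgap := leftEnd_two_mul_add_one (a := a) (k := k) (i := i)
  have hright := rightEnd_two_mul_add_one (k := k) (i := i) ha₀ ha hs
  have hle₀ := leftEnd_le_rightEnd (k := k + 1) (j := 2 * i) ha₀
  have hle₁ := leftEnd_le_rightEnd (k := k + 1) (j := 2 * i + 1) ha₀
  have hgap₀ := ha₀ (2 ^ k + i - 1)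
  rw [hdiv]
  rcases hi with rfl | rfl <;> exact Icc_subset_Icc (by linarith) (by linarith)

lemma rightEnd_lt_leftEnd_succ (ha₀ : ∀ n, 0 < a n) (ha : Antitone a) (hs : Summable a)
    (hj : j + 1 < 2 ^ k) : rightEnd a k j < leftEnd a k (j + 1) := by
  induction k generalizing j with
  | zero => simp at hj
  | succ k ih =>
    obtain ⟨i, rfl | rfl⟩ := Nat.even_or_odd' j
    · rw [leftEnd_two_mul_add_one]
      exact lt_add_of_pos_right _ (ha₀ _)
    · rw [rightEnd_two_mul_add_one (fun n => (ha₀ n).le) ha hs,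
        show 2 * i + 1 + 1 = 2 * (i + 1) by ring, leftEnd_two_mul]
      exact ih (by omega)

lemma rightEnd_add_stepLen_lt_leftEnd (ha₀ : ∀ n, 0 < a n) (ha : Antitone a) (hs : Summable a)
    (hij : i + 2 ≤ j) (hj : j < 2 ^ k) : rightEnd a k i + stepLen a (k + 1) < leftEnd a k j := by
  have hle n : 0 ≤ a n := (ha₀ n).le
  induction j, hij using Nat.le_induction with
  | base =>
    calc rightEnd a k i + stepLen a (k + 1)
        < leftEnd a k (i + 1) + nodeLen a (2 ^ k + (i + 1)) :=
          add_lt_add_of_lt_of_le (rightEnd_lt_leftEnd_succ ha₀ ha hs (by omega))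
            (stepLen_succ_le_nodeLen hle ha hs (by omega))
      _ < leftEnd a k (i + 2) := rightEnd_lt_leftEnd_succ ha₀ ha hs hj
  | succ j _ ih =>
    calc rightEnd a k i + stepLen a (k + 1) < leftEnd a k j := ih (by omega)
      _ ≤ rightEnd a k j := leftEnd_le_rightEnd hle
      _ < leftEnd a k (j + 1) := rightEnd_lt_leftEnd_succ ha₀ ha hs hj

lemma index_le_add_one_of_dist_le (ha₀ : ∀ n, 0 < a n) (ha : Antitone a) (hs : Summable a)
    (hj : j < 2 ^ k) (hx : x ∈ stepInterval a k i) (hy : y ∈ stepInterval a k j)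
    (hxy : dist y x ≤ stepLen a (k + 1)) : j ≤ i + 1 := by
  by_contra! hij
  have hgap := rightEnd_add_stepLen_lt_leftEnd ha₀ ha hs hij hj
  linarith [hx.2, hy.1, (le_abs_self (y - x)).trans hxy]

lemma stepInterval_subset_ball (ha₀ : ∀ n, 0 ≤ a n) (ha : Antitone a) (hs : Summable a) {r : ℝ}
    (hx : x ∈ stepInterval a k j) (hr : stepLen a k < r) : stepInterval a k j ⊆ ball x r := by
  intro y hy
  have hlen : rightEnd a k j ≤ leftEnd a k j + stepLen a k :=
    add_le_add_right (nodeLen_le_stepLen ha₀ ha hs j) _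
  rw [mem_ball, Real.dist_eq, abs_lt]
  constructor <;> linarith [hx.1, hx.2, hy.1, hy.2]

end StepIntervals

section CantorMeasure

variable {a : ℕ → ℝ} {k j : ℕ} {t x : ℝ}

/-- Index of the dyadic interval of length `2⁻ᵏ` containing `t`; its binary digits are the first
`k` digits of `t ∈ [0, 1)`. -/
noncomputable def dyadicIndex (k : ℕ) (t : ℝ) : ℕ := ⌊t * 2 ^ k⌋₊

lemma dyadicIndex_succ_div_two : dyadicIndex (k + 1) t / 2 = dyadicIndex k t := by
  rw [dyadicIndex, ← Nat.floor_div_ofNat, dyadicIndex]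
  congr 1
  rw [pow_succ]
  ring

lemma dyadicIndex_eq_iff (ht : 0 ≤ t) :
    dyadicIndex k t = j ↔ t ∈ Ico ((j : ℝ) / 2 ^ k) ((j + 1) / 2 ^ k) := by
  rw [dyadicIndex, Nat.floor_eq_iff (by positivity), mem_Ico, div_le_iff₀ (by positivity),
    lt_div_iff₀ (by positivity)]

lemma dyadicIndex_lt (ht : t ∈ Ico (0 : ℝ) 1) : dyadicIndex k t < 2 ^ k := by
  rw [dyadicIndex, Nat.floor_lt (mul_nonneg ht.1 (by positivity))]
  push_cast
  exact mul_lt_of_lt_one_left (by positivity) ht.2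

lemma volume_Ico_div_two_pow (p q : ℝ) :
    volume (Ico (p / 2 ^ k) (q / 2 ^ k)) = ENNReal.ofReal (q - p) * (2 ^ k)⁻¹ := by
  rw [Real.volume_Ico, ← sub_div, ENNReal.ofReal_div_of_pos (by positivity), div_eq_mul_inv,
    ENNReal.ofReal_pow two_pos.le, ENNReal.ofReal_ofNat]

/-- Coding of the Cantor set by binary expansions: `t ∈ [0, 1)` is sent to the point lying, for
each `k`, in the step-`k` interval indexed by the first `k` binary digits of `t`. -/
noncomputable def codingMap (a : ℕ → ℝ) (t : ℝ) : ℝ := ⨆ k, leftEnd a k (dyadicIndex k t)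

lemma measurable_codingMap : Measurable (codingMap a) :=
  .iSup fun k => (measurable_from_top (f := leftEnd a k)).comp
    (Nat.measurable_floor.comp (measurable_id.mul_const _))

lemma codingMap_mem_stepInterval (ha₀ : ∀ n, 0 ≤ a n) (ha : Antitone a) (hs : Summable a)
    (t : ℝ) (k : ℕ) : codingMap a t ∈ stepInterval a k (dyadicIndex k t) := by
  have hnested : Antitone fun k => stepInterval a k (dyadicIndex k t) :=
    antitone_nat_of_succ_le fun k =>
      dyadicIndex_succ_div_two (k := k) (t := t) ▸
        stepInterval_succ_subset (j := dyadicIndex (k + 1) t) ha₀ ha hs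
  exact mem_iInter.1
    (ciSup_mem_iInter_Icc_of_antitone_Icc hnested fun _ => leftEnd_le_rightEnd ha₀) k

lemma codingMap_mem_cantorSetOf (ha₀ : ∀ n, 0 ≤ a n) (ha : Antitone a) (hs : Summable a)
    (ht : t ∈ Ico (0 : ℝ) 1) : codingMap a t ∈ cantorSetOf a :=
  mem_cantorSetOf.2 fun k => ⟨_, dyadicIndex_lt ht, codingMap_mem_stepInterval ha₀ ha hs t k⟩

/-- The uniform Cantor measure on `cantorSetOf a`, giving mass `2⁻ᵏ` to each step-`k` interval:
the image of Lebesgue measure on `[0, 1)` under `codingMap a`. -/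
noncomputable def cantorMeasure (a : ℕ → ℝ) : Measure ℝ :=
  (volume.restrict (Ico 0 1)).map (codingMap a)

instance : IsProbabilityMeasure (cantorMeasure a) :=
  have : IsProbabilityMeasure (volume.restrict (Ico (0 : ℝ) 1)) := ⟨by simp⟩
  Measure.isProbabilityMeasure_map measurable_codingMap.aemeasurable

lemma cantorMeasure_apply {s : Set ℝ} (hs : MeasurableSet s) :
    cantorMeasure a s = volume (codingMap a ⁻¹' s ∩ Ico 0 1) := by
  rw [cantorMeasure, Measure.map_apply measurable_codingMap hs,
    Measure.restrict_apply (measurable_codingMap hs)]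

lemma cantorMeasure_cantorSetOf (ha₀ : ∀ n, 0 ≤ a n) (ha : Antitone a) (hs : Summable a) :
    cantorMeasure a (cantorSetOf a) = 1 := by
  refine le_antisymm prob_le_one ?_
  calc (1 : ℝ≥0∞) = volume.restrict (Ico (0 : ℝ) 1) (Ico 0 1) := by simp
    _ ≤ volume.restrict (Ico 0 1) (codingMap a ⁻¹' cantorSetOf a) :=
        measure_mono fun _ => codingMap_mem_cantorSetOf ha₀ ha hs
    _ ≤ cantorMeasure a (cantorSetOf a) := Measure.le_map_apply measurable_codingMap.aemeasurable _

lemma le_cantorMeasure_ball (ha₀ : ∀ n, 0 ≤ a n) (ha : Antitone a) (hs : Summable a) {r : ℝ}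
    (hx : x ∈ cantorSetOf a) (hr : stepLen a k < r) : (2 ^ k)⁻¹ ≤ cantorMeasure a (ball x r) := by
  obtain ⟨j, hj, hxj⟩ := mem_cantorSetOf.1 hx k
  have hsub : Ico ((j : ℝ) / 2 ^ k) ((j + 1) / 2 ^ k) ⊆ Ico 0 1 :=
    Ico_subset_Ico (by positivity) ((div_le_one (by positivity)).2 (by exact_mod_cast hj))
  calc (2 ^ k)⁻¹ = volume (Ico ((j : ℝ) / 2 ^ k) ((j + 1) / 2 ^ k)) := by
        rw [volume_Ico_div_two_pow, add_sub_cancel_left, ENNReal.ofReal_one, one_mul]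
    _ ≤ volume (codingMap a ⁻¹' ball x r ∩ Ico 0 1) := by
        refine measure_mono fun t ht => ⟨stepInterval_subset_ball ha₀ ha hs hxj hr ?_, hsub ht⟩
        exact (dyadicIndex_eq_iff (hsub ht).1).2 ht ▸ codingMap_mem_stepInterval ha₀ ha hs t k
    _ = cantorMeasure a (ball x r) := (cantorMeasure_apply measurableSet_ball).symm

lemma cantorMeasure_closedBall_le (ha₀ : ∀ n, 0 < a n) (ha : Antitone a) (hs : Summable a)
    (hx : x ∈ cantorSetOf a) :
    cantorMeasure a (closedBall x (stepLen a (k + 1))) ≤ 3 * (2 ^ k)⁻¹ := by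
  obtain ⟨j, hj, hxj⟩ := mem_cantorSetOf.1 hx k
  calc cantorMeasure a (closedBall x (stepLen a (k + 1)))
      = volume (codingMap a ⁻¹' closedBall x (stepLen a (k + 1)) ∩ Ico 0 1) :=
        cantorMeasure_apply measurableSet_closedBall
    _ ≤ volume (Ico (((j : ℝ) - 1) / 2 ^ k) ((j + 2) / 2 ^ k)) := by
        refine measure_mono fun t ⟨htx, ht⟩ => ?_
        have htk := codingMap_mem_stepInterval (fun n => (ha₀ n).le) ha hs t k
        have hle : (dyadicIndex k t : ℝ) ≤ j + 1 := by
          exact_mod_cast index_le_add_one_of_dist_le ha₀ ha hs (dyadicIndex_lt ht) hxj htk htx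
        have hge : (j : ℝ) ≤ dyadicIndex k t + 1 := by
          exact_mod_cast
            index_le_add_one_of_dist_le ha₀ ha hs hj htk hxj (dist_comm x _ ▸ htx)
        have htI := (dyadicIndex_eq_iff (k := k) (j := dyadicIndex k t) ht.1).1 rfl
        exact Ico_subset_Ico (div_le_div_of_nonneg_right (by linarith) (by positivity))
          (div_le_div_of_nonneg_right (by linarith) (by positivity)) htI
    _ = 3 * (2 ^ k)⁻¹ := by
        rw [volume_Ico_div_two_pow, show (j : ℝ) + 2 - (j - 1) = 3 by ring, ENNReal.ofReal_ofNat]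

end CantorMeasure

section Comparison

variable {A : ℝ} {a : ℕ → ℝ} {h : ℝ → ℝ≥0∞}

/-- The quantity `limsup 2ᵏ h(sₖ)`, with `sₖ = stepLen a k`, to which both the packing pre-measure
and the packing measure of `cantorSetOf a` are comparable. -/
noncomputable def limsupStepSum (a : ℕ → ℝ) (h : ℝ → ℝ≥0∞) : ℝ≥0∞ :=
  limsup (fun k => 2 ^ k * h (stepLen a k)) atTop

lemma P0h_cantorSetOf_le_of_eventually_le (ha₀ : ∀ n, 0 < a n) (ha : Antitone a)
    (hs : Summable a) (hA : 0 < A) (hmono : MonotoneOn h (Ioc 0 A)) {L : ℝ≥0∞}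
    (hL : ∀ᶠ k in atTop, 2 ^ k * h (2 * stepLen a k) ≤ L) :
    P0h A h (cantorSetOf a) ≤ 2 * L := by
  have hlen := tendsto_stepLen ha₀ ha hs
  have hlenA : ∀ᶠ k in atTop, stepLen a k ∈ Ioo 0 (A / 2) :=
    hlen.eventually (Ioo_mem_nhdsGT (half_pos hA))
  have hball : ∀ᶠ r in 𝓝[>] (0 : ℝ), ∀ x ∈ cantorSetOf a,
      h (2 * r) ≤ 2 * L * cantorMeasure a (ball x r) := by
    filter_upwards [eventually_exists_mem_Ioc_of_tendsto hlen (hL.and hlenA),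
      self_mem_nhdsWithin] with r ⟨k, ⟨hk, hkA⟩, hr⟩ hr₀ x hx
    calc h (2 * r) ≤ h (2 * stepLen a k) := by
          refine hmono ⟨?_, ?_⟩ ⟨?_, ?_⟩ ?_ <;> linarith [hkA.1, hkA.2, hr.2, mem_Ioi.1 hr₀]
      _ ≤ L * (2 ^ k)⁻¹ := by
          rw [← div_eq_mul_inv]
          exact ENNReal.le_div_iff_mul_le (by simp) (by simp) |>.2 (by rwa [mul_comm])
      _ = 2 * L * (2 ^ (k + 1))⁻¹ := by
          rw [pow_succ', ENNReal.mul_inv (by simp) (by simp), mul_comm 2 L, mul_assoc,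
            ENNReal.mul_inv_cancel_left (by simp) (by simp)]
      _ ≤ 2 * L * cantorMeasure a (ball x r) := by
          gcongr
          exact le_cantorMeasure_ball (fun n => (ha₀ n).le) ha hs hx hr.1
  simpa only [measure_univ, mul_one] using P0h_le_mul_measure_univ hA hball

lemma P0h_cantorSetOf_le_mul_limsupStepSum (ha₀ : ∀ n, 0 < a n) (ha : Antitone a)
    (hs : Summable a) (hA : 0 < A) (hmono : MonotoneOn h (Ioc 0 A)) {τ : ℝ≥0∞}
    (hτ : 0 < τ) (hτ_top : τ ≠ ∞) (hdouble : ∀ x, 0 < x → 2 * x ≤ A → τ * h (2 * x) ≤ h x) :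
    P0h A h (cantorSetOf a) ≤ 2 / τ * limsupStepSum a h := by
  have hC₀ : 2 / τ ≠ 0 := ENNReal.div_ne_zero.2 ⟨two_ne_zero, hτ_top⟩
  have hC_top : 2 / τ ≠ ∞ := by finiteness
  rw [← ENNReal.div_le_iff' hC₀ hC_top]
  refine le_of_forall_gt_imp_ge_of_dense fun L hL => ?_
  rw [ENNReal.div_le_iff' hC₀ hC_top, ENNReal.mul_comm_div]
  refine P0h_cantorSetOf_le_of_eventually_le ha₀ ha hs hA hmono ?_
  filter_upwards [eventually_lt_of_limsup_lt hL,
    (tendsto_stepLen ha₀ ha hs).eventually (Ioo_mem_nhdsGT (half_pos hA))] with k hk hkA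
  rw [ENNReal.le_div_iff_mul_le (.inl hτ.ne') (.inl hτ_top)]
  calc 2 ^ k * h (2 * stepLen a k) * τ = 2 ^ k * (τ * h (2 * stepLen a k)) := by ring
    _ ≤ 2 ^ k * h (stepLen a k) := by
        gcongr
        exact hdouble _ hkA.1 (by linarith [hkA.2])
    _ ≤ L := hk.le

lemma limsupStepSum_le_mul_Ph (ha₀ : ∀ n, 0 < a n) (ha : Antitone a) (hs : Summable a) :
    limsupStepSum a h ≤ 6 * Ph A h (cantorSetOf a) := by
  refine le_of_forall_lt_imp_le_of_dense fun c hc => ?_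
  have hfreq : ∃ᶠ k in atTop, c < 2 ^ (k + 1) * h (stepLen a (k + 1)) :=
    frequently_lt_of_lt_limsup (by isBoundedDefault)
      (hc.trans_eq (limsup_nat_add (fun k => 2 ^ k * h (stepLen a k)) 1).symm)
  have hball : ∃ᶠ r in 𝓝[>] (0 : ℝ), ∀ x ∈ cantorSetOf a,
      c / 6 * cantorMeasure a (closedBall x r) ≤ h r := by
    refine ((tendsto_stepLen ha₀ ha hs).comp (tendsto_add_atTop_nat 1)).frequently
      (hfreq.mono fun k hk x hx => ?_)
    calc c / 6 * cantorMeasure a (closedBall x (stepLen a (k + 1)))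
        ≤ c / 6 * (3 * (2 ^ k)⁻¹) := by gcongr; exact cantorMeasure_closedBall_le ha₀ ha hs hx
      _ = c / 2 ^ (k + 1) := by
        rw [show (6 : ℝ≥0∞) = 2 * 3 by norm_num, pow_succ', div_eq_mul_inv, div_eq_mul_inv,
          ENNReal.mul_inv (by simp) (by simp), ENNReal.mul_inv (by simp) (by simp), mul_assoc,
          mul_assoc, ENNReal.inv_mul_cancel_left (by simp) (by simp)]
      _ ≤ h (stepLen a (k + 1)) := ENNReal.div_le_of_le_mul' hk.le
  have hPh := mul_measure_le_Ph (A := A) hball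
  rwa [cantorMeasure_cantorSetOf (fun n => (ha₀ n).le) ha hs, mul_one,
    ENNReal.div_le_iff' (by simp) (by simp)] at hPh

end Comparison

theorem prepacking_iff_packing_cantor_general {A : ℝ} (hA : 0 < A) {a : ℕ → ℝ}
    (ha₀ : ∀ n, 0 < a n) (ha : Antitone a) (hs : Summable a) {h : ℝ → ℝ≥0∞}
    (hmono : MonotoneOn h (Ioc 0 A))
    (hdouble : ∃ τ : ℝ≥0∞, 0 < τ ∧ τ ≠ ∞ ∧ ∀ x : ℝ, 0 < x → 2 * x ≤ A → τ * h (2 * x) ≤ h x) :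
    (P0h A h (cantorSetOf a) = 0 ↔ Ph A h (cantorSetOf a) = 0) ∧
    (P0h A h (cantorSetOf a) = ∞ ↔ Ph A h (cantorSetOf a) = ∞) ∧
    (0 < P0h A h (cantorSetOf a) ∧ P0h A h (cantorSetOf a) < ∞ ↔
      0 < Ph A h (cantorSetOf a) ∧ Ph A h (cantorSetOf a) < ∞) := by
  obtain ⟨τ, hτ, hτ_top, hdouble⟩ := hdouble
  refine zero_top_pos_iff_of_le_of_le_mul (Ph_le_P0h hA) (C := 2 / τ * 6) (by finiteness) ?_
  calc P0h A h (cantorSetOf a) ≤ 2 / τ * limsupStepSum a h :=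
        P0h_cantorSetOf_le_mul_limsupStepSum ha₀ ha hs hA hmono hτ hτ_top hdouble
    _ ≤ 2 / τ * (6 * Ph A h (cantorSetOf a)) := by
        gcongr
        exact limsupStepSum_le_mul_Ph ha₀ ha hs
    _ = 2 / τ * 6 * Ph A h (cantorSetOf a) := (mul_assoc _ _ _).symm

/-- Corollary (i): for the Cantor set `C_a` and any dimension
function `h`: `P₀^h(C_a) = 0 ↔ P^h(C_a) = 0`, `P₀^h(C_a) = ∞ ↔ P^h(C_a) = ∞`,
and `0 < P₀^h(C_a) < ∞ ↔ 0 < P^h(C_a) < ∞`. -/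
theorem prepacking_iff_packing_cantor (A : ℝ) (a : ℕ → ℝ)
    (apos : ∀ n, 0 < a n) (amono : ∀ n, a (n + 1) ≤ a n) (asum : Summable a)
    (h : ℝ → ℝ≥0∞) (hd : IsDimFun A h) :
    (P0h A h (cantorSetOf a) = 0 ↔ Ph A h (cantorSetOf a) = 0) ∧
    (P0h A h (cantorSetOf a) = ∞ ↔ Ph A h (cantorSetOf a) = ∞) ∧
    (0 < P0h A h (cantorSetOf a) ∧ P0h A h (cantorSetOf a) < ∞ ↔
      0 < Ph A h (cantorSetOf a) ∧ Ph A h (cantorSetOf a) < ∞) :=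
  prepacking_iff_packing_cantor_general hd.posA apos (antitone_nat_of_succ_le amono) asum
    hd.strictMonoOn.monotoneOn hd.doubling
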